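/- Let q be a prime power, let n ≥ 1, let s be an integer with gcd(s,n) = 1, put σ = q^s, and let f(x) = Σ_{i=0}^{n−1} a_i x^{σ^i} ∈ F_{q^n}[x]. Let 0 ≤ m ≤ dim_q ker f, and let J, K ⊆ {0,1,…,n−1} each be a set of m consecutive integers modulo n (i.e. of the form {j, j+1, …, j+m−1} reduced mod n). Let M_{J,K}(f) be the (n−m)×(n−m) matrix obtained from D_σ(f) by removing the rows with indices in J and the columns with indices in K. Then det(M_{J,K}(f)) = 0 if and only if det(D_{m,σ}(f)) = 0. -/

import Mathlib

/-!
Let `φ x = x ^ σ` and let `μ` be the dimension of the kernel of `f = ∑ a_i φ ^ i`. Every minor of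
the Dickson matrix obtained by removing `m ≤ μ` cyclically consecutive rows and columns vanishes if
and only if `m < μ` (`key`). As `D_{m,σ}(f)` is one of these minors, the equivalence follows.

The engine is `vanish_shift`: since `gcd(s, n) = 1`, the map `φ` fixes at most `q` elements, so an
operator involving `k` consecutive powers of `φ` that kills an additive subgroup with at least `q ^ k`
elements has all its coefficients zero. A combination of rows of the Dickson matrix, with
coefficients `c`, is the coefficient vector of `g = ∑ c_i φ ^ i ∘ f`, which kills `ker f`.

* If `m < μ` and the minor is nonzero, some `c` makes `g` equal to `1` at the first kept column and
  `0` at the other kept ones. Then `g` involves only `m + 1` consecutive powers and kills `ker f`,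
  so it is zero, a contradiction.
* If `m = μ` and the minor is zero, some `c ≠ 0` makes `g` vanish at all kept columns. Then `g`
  involves only `m` consecutive powers, so `g = 0`. Thus `∑ c_i φ ^ i`, with `n - m` consecutive
  powers, kills the image of `f`, which has `q ^ (n - m)` elements, and `c = 0`.
-/

/-- `D_{m,σ}(f)`: the `(n-m) × (n-m)` matrix obtained from the `σ`-Dickson matrix of
`f = ∑_{i=0}^{n-1} a_i x^{σ^i}` by removing its first `m` columns and last `m` rows. -/
noncomputable def dickSub (σ n m : ℕ) {F : Type*} [Field F] (a : ℕ → F) :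
    Matrix (Fin (n - m)) (Fin (n - m)) F :=
  Matrix.of fun i j => a ((j.val + m + n - i.val) % n) ^ σ ^ i.val

section

open Finset

/-- Summation by parts: if `∑ i, c i = 0`, then `∑ i, c i φ ^ i` factors on the right through
`φ - 1`, with the negated partial sums of `c` as coefficients. -/
theorem telescope {F : Type*} [Field F] (φ : F →+* F) (c : ℕ → F) (z : F) (k : ℕ) :
    ∑ i ∈ range k, (-∑ j ∈ range (i + 1), c j) * (φ ^ i) (φ z - z)
      = ∑ i ∈ range (k + 1), c i * (φ ^ i) z - (∑ i ∈ range (k + 1), c i) * (φ ^ k) z := by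
  induction k with
  | zero => simp
  | succ k ih =>
    have h : (φ ^ k) (φ z) = (φ ^ (k + 1)) z := by rw [pow_succ, RingHom.mul_def, RingHom.comp_apply]
    rw [sum_range_succ, ih, map_sub, h, sum_range_succ _ (k + 1), sum_range_succ c (k + 1)]
    ring

/-- A nonzero operator `∑_{i<k} c i φ ^ i`, where `φ` fixes at most `q` elements, has fewer than
`q ^ k` zeros. After rescaling by a nonzero `u ∈ U`, the operator factors as `h ∘ (φ - 1)` with `h`
of length `k - 1`, and `h` kills a group smaller than `U` by a factor of at most `q`. -/
theorem vanish {F : Type*} [Field F] [Finite F] (φ : F →+* F) (q : ℕ) (hq : 2 ≤ q)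
    (hfix : Nat.card {x : F // φ x = x} ≤ q) (k : ℕ) :
    ∀ (c : ℕ → F) (U : AddSubgroup F), q ^ k ≤ Nat.card U →
      (∀ x ∈ U, ∑ i ∈ range k, c i * (φ ^ i) x = 0) → ∀ i < k, c i = 0 := by
  induction k with
  | zero => intro _ _ _ _ i hi; omega
  | succ k ih =>
    intro c U hU h
    obtain ⟨u, huU, hu⟩ : ∃ u ∈ U, u ≠ 0 := by
      by_contra! hc
      have : U = ⊥ := (AddSubgroup.eq_bot_iff_forall U).2 hc
      have h1 : q ^ 1 ≤ q ^ (k + 1) := Nat.pow_le_pow_right (by omega) (by omega)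
      rw [pow_one] at h1
      rw [this, AddSubgroup.card_bot] at hU
      omega
    let ψ : U →+ F :=
      { toFun := fun x => φ (x / u) - x / u
        map_zero' := by simp
        map_add' := fun x y => by simp [add_div]; ring }
    have hker : Nat.card ψ.ker ≤ q := by
      refine le_trans (Nat.card_le_card_of_injective
        (fun x : ψ.ker => (⟨(x : U) / u, sub_eq_zero.1 x.2⟩ : {x : F // φ x = x})) ?_) hfix
      intro x y hxy
      have := congrArg Subtype.val hxy
      simp only [div_left_inj' hu] at this
      exact Subtype.ext (Subtype.ext this)
    have hrange : q ^ k ≤ Nat.card ψ.range := by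
      have h1 := ψ.ker.card_mul_index
      rw [AddSubgroup.index_ker] at h1
      have h2 : q * q ^ k ≤ q * Nat.card ψ.range := by
        rw [← pow_succ']
        exact (hU.trans h1.symm.le).trans (Nat.mul_le_mul_right _ hker)
      exact Nat.le_of_mul_le_mul_left h2 (by omega)
    have hb := ih (fun i => -∑ j ∈ range (i + 1), c j * (φ ^ j) u) ψ.range hrange (by
      rintro _ ⟨x, rfl⟩
      change ∑ i ∈ range k, (-∑ j ∈ range (i + 1), c j * (φ ^ j) u) *
        (φ ^ i) (φ (x / u) - x / u) = 0
      rw [telescope φ (fun j => c j * (φ ^ j) u), h u huU, zero_mul, sub_zero, ← h x x.2]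
      refine sum_congr rfl fun i _ => ?_
      rw [mul_assoc, ← map_mul, mul_div_cancel₀ _ hu])
    -- All partial sums of `c j * φ ^ j u` vanish, hence so do the summands.
    have hs : ∀ i ≤ k + 1, ∑ j ∈ range i, c j * (φ ^ j) u = 0 := by
      intro i hi
      rcases Nat.eq_zero_or_pos i with rfl | hpos
      · simp
      rcases hi.eq_or_lt with rfl | hlt
      · exact h u huU
      · have := hb (i - 1) (by omega)
        rwa [neg_eq_zero, Nat.sub_add_cancel hpos] at this
    intro i hi
    have h1 := hs (i + 1) (by omega)
    rw [sum_range_succ, hs i (by omega), zero_add] at h1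
    exact (mul_eq_zero.1 h1).resolve_right ((map_ne_zero _).2 hu)

/-- `vanish` for exponents running through any `k` consecutive integers `j, …, j + k - 1`. -/
theorem vanish_shift {F : Type*} [Field F] [Finite F] (φ : F →+* F) (q : ℕ) (hq : 2 ≤ q)
    (hfix : Nat.card {x : F // φ x = x} ≤ q) (k j : ℕ) (c : ℕ → F) (U : AddSubgroup F)
    (hU : q ^ k ≤ Nat.card U) (h : ∀ x ∈ U, ∑ i ∈ range k, c i * (φ ^ (j + i)) x = 0) :
    ∀ i < k, c i = 0 := by
  refine vanish φ q hq hfix k c (U.map (φ ^ j).toAddMonoidHom) ?_ ?_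
  · rwa [AddSubgroup.card_map_of_injective (φ ^ j).injective]
  · rintro _ ⟨x, hx, rfl⟩
    rw [← h x hx]
    refine sum_congr rfl fun i _ => ?_
    rw [add_comm j i, pow_add]
    rfl

theorem sum_cyclic_shift {F : Type*} [AddCommMonoid F] (n : ℕ) (g : ℕ → F) (k : ℕ) :
    ∑ t ∈ range n, g ((k + t) % n) = ∑ j ∈ range n, g j := by
  induction k with
  | zero => exact sum_congr rfl fun j hj => by rw [zero_add, Nat.mod_eq_of_lt (mem_range.1 hj)]
  | succ k ih =>
    rw [← ih]
    rcases n with _ | n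
    · simp
    rw [sum_range_succ, sum_range_succ']
    congr 1
    · exact sum_congr rfl fun t _ => by rw [add_right_comm, add_assoc]
    · rw [show k + 1 + n = k + 0 + (n + 1) by ring, Nat.add_mod_right]

theorem pow_mod_eq {F : Type*} [Field F] (φ : F →+* F) (n : ℕ) (hφ : φ ^ n = 1) (i : ℕ) :
    φ ^ (i % n) = φ ^ i := by
  conv_rhs => rw [← Nat.mod_add_div i n, pow_add, pow_mul, hφ, one_pow, mul_one]

/-- Row `i` of the Dickson matrix consists of the coefficients of `φ ^ i ∘ f`. -/
theorem dickson_row {F : Type*} [Field F] (φ : F →+* F) (n : ℕ) (hφ : φ ^ n = 1)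
    (a : ℕ → F) (i : ℕ) (hi : i < n) (x : F) :
    ∑ j ∈ range n, (φ ^ i) (a ((j + n - i) % n)) * (φ ^ j) x
      = (φ ^ i) (∑ t ∈ range n, a t * (φ ^ t) x) := by
  rw [← sum_cyclic_shift n _ i, map_sum]
  refine sum_congr rfl fun t ht => ?_
  have ht := mem_range.1 ht
  have h : ((i + t) % n + n - i) % n = t := by
    rcases lt_or_ge (i + t) n with h | h
    · rw [Nat.mod_eq_of_lt h, show i + t + n - i = t + n by omega, Nat.add_mod_right,
        Nat.mod_eq_of_lt ht]
    · rw [Nat.mod_eq_sub_mod h, Nat.mod_eq_of_lt (show i + t - n < n by omega),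
        show i + t - n + n - i = t by omega, Nat.mod_eq_of_lt ht]
  rw [h, pow_mod_eq φ n hφ, map_mul, pow_add]
  rfl

/-- A combination of rows `ρ r` (mod `n`) of the Dickson matrix gives the coefficients of the
same combination of the operators `φ ^ ρ r ∘ f`, here with columns listed cyclically from `k0`. -/
theorem combination {F : Type*} [Field F] (φ : F →+* F) (n : ℕ) (hn : 0 < n) (hφ : φ ^ n = 1)
    (a : ℕ → F) {l : ℕ} (ρ : ℕ → ℕ) (c : Fin l → F) (k0 : ℕ) (x : F) :
    ∑ t ∈ range n, (∑ r : Fin l, c r * (φ ^ (ρ r % n))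
        (a (((k0 + t) % n + n - ρ r % n) % n))) * (φ ^ (k0 + t)) x
      = ∑ r : Fin l, c r * (φ ^ ρ r) (∑ t ∈ range n, a t * (φ ^ t) x) := by
  simp_rw [← pow_mod_eq φ n hφ (ρ _), ← pow_mod_eq φ n hφ (k0 + _)]
  rw [sum_cyclic_shift n (fun j => (∑ r : Fin l, c r * (φ ^ (ρ r % n))
        (a ((j + n - ρ r % n) % n))) * (φ ^ j) x) k0]
  simp_rw [sum_mul]
  rw [sum_comm]
  refine sum_congr rfl fun r _ => ?_
  rw [← dickson_row φ n hφ a _ (Nat.mod_lt _ hn) x, mul_sum]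
  exact sum_congr rfl fun j _ => mul_assoc _ _ _

/-- The operator `f = ∑_{t<n} a t φ ^ t` as an additive endomorphism of `F`. -/
def linPoly {F : Type*} [Field F] (φ : F →+* F) (n : ℕ) (a : ℕ → F) : F →+ F where
  toFun x := ∑ t ∈ range n, a t * (φ ^ t) x
  map_zero' := by simp
  map_add' x y := by simp [mul_add, sum_add_distrib]

/-- A cyclic minor of size `n - m` of the Dickson matrix vanishes exactly when `m` is less than
the kernel dimension `μ`, wherever the removed blocks start. -/
theorem key {F : Type*} [Field F] [Finite F] (φ : F →+* F) (q n : ℕ) (hq : 2 ≤ q) (hn : 0 < n)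
    (hF : Nat.card F = q ^ n) (hφ : φ ^ n = 1) (hfix : Nat.card {x : F // φ x = x} ≤ q)
    (a : ℕ → F) (μ m j0 k0 : ℕ) (hker : Nat.card (linPoly φ n a).ker = q ^ μ) (hm : m ≤ μ)
    (hμ : μ ≤ n) (N : Matrix (Fin (n - m)) (Fin (n - m)) F)
    (hN : ∀ r t, N r t = (φ ^ ((j0 + m + r.val) % n))
      (a (((k0 + (m + t.val)) % n + n - (j0 + m + r.val) % n) % n))) :
    N.det = 0 ↔ m < μ := by
  -- `G c t` is the coefficient of `φ ^ (k0 + t)` in `∑ r, c r • φ ^ (j0 + m + r) ∘ f`.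
  let G : (Fin (n - m) → F) → ℕ → F := fun c t => ∑ r : Fin (n - m), c r *
    (φ ^ ((j0 + m + r.val) % n)) (a (((k0 + t) % n + n - (j0 + m + r.val) % n) % n))
  have hG : ∀ c x, ∑ t ∈ range n, G c t * (φ ^ (k0 + t)) x
      = ∑ r : Fin (n - m), c r * (φ ^ (j0 + m + r.val)) (linPoly φ n a x) := fun c x =>
    combination φ n hn hφ a (fun r => j0 + m + r) c k0 x
  have hGN : ∀ c (t : Fin (n - m)), G c (m + t.val) = (Matrix.vecMul c N) t := fun c t => by
    simp only [G, Matrix.vecMul, dotProduct, hN]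
  have hGker : ∀ c k, k ≤ n → (∀ t, k ≤ t → t < n → G c t = 0) → k ≤ μ →
      ∀ t < k, G c t = 0 := by
    intro c k hk h0 hkμ
    refine vanish_shift φ q hq hfix k k0 (G c) (linPoly φ n a).ker ?_ ?_
    · rw [hker]
      exact Nat.pow_le_pow_right (by omega) hkμ
    · intro x hx
      have h := hG c x
      rw [AddMonoidHom.mem_ker.1 hx] at h
      simp only [map_zero, mul_zero, sum_const_zero] at h
      rw [← h]
      refine sum_subset (range_mono hk) fun t ht ht' => ?_
      rw [mem_range] at ht ht'
      rw [h0 t (by omega) ht, zero_mul]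
  constructor
  · intro hdet
    by_contra hlt
    obtain rfl : m = μ := by omega
    obtain ⟨c, hc, hcN⟩ := Matrix.exists_vecMul_eq_zero_iff.2 hdet
    have hhigh : ∀ t, m ≤ t → t < n → G c t = 0 := by
      intro t h1 h2
      have := hGN c ⟨t - m, by omega⟩
      rwa [hcN, Pi.zero_apply, Nat.add_sub_cancel' h1] at this
    have hall : ∀ t < n, G c t = 0 := fun t ht => by
      rcases lt_or_ge t m with h | h
      · exact hGker c m hμ hhigh le_rfl t h
      · exact hhigh t h ht
    have hcard : q ^ (n - m) ≤ Nat.card (linPoly φ n a).range := by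
      have h1 := (linPoly φ n a).ker.card_mul_index
      rw [AddSubgroup.index_ker, hker, hF, show q ^ n = q ^ m * q ^ (n - m) by
        rw [← pow_add, Nat.add_sub_cancel' hμ]] at h1
      exact (Nat.eq_of_mul_eq_mul_left (by positivity) h1).ge
    have hc0 := vanish_shift φ q hq hfix (n - m) (j0 + m)
      (fun r => if h : r < n - m then c ⟨r, h⟩ else 0) _ hcard (by
        rintro _ ⟨x, rfl⟩
        rw [← Fin.sum_univ_eq_sum_range (fun r => (if h : r < n - m then c ⟨r, h⟩ else 0) *
          (φ ^ (j0 + m + r)) (linPoly φ n a x))]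
        simp only [Fin.is_lt, dite_true, Fin.eta]
        rw [← hG c x]
        exact sum_eq_zero fun t ht => by rw [hall t (mem_range.1 ht), zero_mul])
    refine hc (funext fun r => ?_)
    simpa using hc0 r r.2
  · intro hlt
    by_contra hdet
    -- Since `N` is invertible, some combination of its rows is the first unit vector.
    let e : Fin (n - m) → F := Pi.single ⟨0, by omega⟩ 1
    have hcN : Matrix.vecMul (Matrix.vecMul e N⁻¹) N = e := by
      rw [Matrix.vecMul_vecMul, Matrix.nonsing_inv_mul _ (isUnit_iff_ne_zero.2 hdet),
        Matrix.vecMul_one]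
    have hz := hGker (Matrix.vecMul e N⁻¹) (m + 1) (by omega) (by
      intro t h1 h2
      have := hGN (Matrix.vecMul e N⁻¹) ⟨t - m, by omega⟩
      rw [hcN, Nat.add_sub_cancel' (by omega)] at this
      rw [this]
      exact Pi.single_eq_of_ne (by simp [Fin.ext_iff]; omega) _) hlt m (by omega)
    have h1 := hGN (Matrix.vecMul e N⁻¹) ⟨0, by omega⟩
    rw [hcN, add_zero, hz] at h1
    simp [e] at h1

/-- Since `gcd(s, n) = 1`, an element fixed by both `x ↦ x ^ q ^ s` and `x ↦ x ^ q ^ n` is fixed by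
`x ↦ x ^ q`, hence is a root of `X ^ q - X`. -/
theorem card_fixed {F : Type*} [Field F] [Fintype F] (q n s : ℕ) (hq : 2 ≤ q) (hs : Nat.gcd s n = 1)
    (hF : Fintype.card F = q ^ n) : Nat.card {x : F // x ^ q ^ s = x} ≤ q := by
  classical
  have hiter : ∀ (k : ℕ) (x : F), (fun y : F => y ^ q)^[k] x = x ^ q ^ k := fun k x => by
    rw [pow_iterate]
  have hsub : ∀ x : F, x ^ q ^ s = x → x ^ q = x := by
    intro x hx
    have h1 : Function.IsPeriodicPt (fun y : F => y ^ q) s x := (hiter s x).trans hx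
    have h2 : Function.IsPeriodicPt (fun y : F => y ^ q) n x :=
      (hiter n x).trans (hF ▸ FiniteField.pow_card x)
    have h3 := h1.gcd h2
    rw [hs] at h3
    exact h3
  have hne := FiniteField.X_pow_card_sub_X_ne_zero F (p := q) (by omega)
  have hdeg := FiniteField.X_pow_card_sub_X_natDegree_eq F (p := q) (by omega)
  calc Nat.card {x : F // x ^ q ^ s = x}
      ≤ Nat.card ((Polynomial.X ^ q - Polynomial.X : Polynomial F).roots.toFinset) := by
        refine Nat.card_le_card_of_injective (fun x => ⟨x.1, ?_⟩) fun x y h => ?_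
        · simp [hne, hsub x.1 x.2]
        · exact Subtype.ext (congrArg (fun z => z.1) h)
    _ ≤ q := by
        rw [Nat.card_eq_fintype_card, Fintype.card_coe]
        exact (Multiset.toFinset_card_le _).trans ((Polynomial.card_roots' _).trans hdeg.le)

end

/-- Corollary: let `σ = q^s`, `gcd(s,n) = 1`, `f = ∑_{i=0}^{n-1} a_i x^{σ^i} ∈ F_{q^n}[x]`
and `0 ≤ m ≤ dim_q ker f` (`μ` being the kernel dimension, encoded by the kernel having
`q^μ` elements).  For sets `J = {j₀, …, j₀+m-1}` and `K = {k₀, …, k₀+m-1}` of `m`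
consecutive integers modulo `n`, let `M_{J,K}(f)` be the matrix obtained from `D_σ(f)` by
removing the rows indexed by `J` and the columns indexed by `K` (the remaining rows and
columns being kept in the cyclic orders `j₀+m, …, j₀+n-1` and `k₀+m, …, k₀+n-1` mod `n`,
which affects the determinant only up to sign).  Then
`det M_{J,K}(f) = 0 ↔ det D_{m,σ}(f) = 0`. -/
theorem stmt_8 (p e q n s : ℕ) (hp : p.Prime) (he : 0 < e) (hq : q = p ^ e)
    (hn : 0 < n) (hs : Nat.gcd s n = 1)
    (F : Type*) [Field F] [Fintype F] (hF : Fintype.card F = q ^ n)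
    (a : ℕ → F) (μ m j0 k0 : ℕ)
    (hker : Nat.card {x : F // ∑ i ∈ Finset.range n, a i * x ^ (q ^ s) ^ i = 0} = q ^ μ)
    (hm : m ≤ μ) :
    ((dickSub (q ^ s) n 0 a).submatrix
        (fun r : Fin (n - m) => (⟨(j0 + m + r.val) % n, Nat.mod_lt _ hn⟩ : Fin (n - 0)))
        (fun c : Fin (n - m) => (⟨(k0 + m + c.val) % n, Nat.mod_lt _ hn⟩ : Fin (n - 0)))).det = 0
      ↔ (dickSub (q ^ s) n m a).det = 0 := by
  have hq2 : 2 ≤ q := by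
    rw [hq]
    exact hp.two_le.trans (Nat.le_self_pow he.ne' p)
  have := Fact.mk hp
  have : CharP F p := charP_of_card_eq_prime_pow (f := e * n) (by
    rw [hF, hq, pow_mul])
  let φ : F →+* F := iterateFrobenius F p (e * s)
  have hφ1 : ∀ x, φ x = x ^ q ^ s := fun x => by
    rw [iterateFrobenius_def, hq, pow_mul]
  have hφi : ∀ i x, (φ ^ i) x = x ^ (q ^ s) ^ i := fun i x => by
    rw [RingHom.coe_pow, show (φ : F → F) = fun y => y ^ q ^ s from funext hφ1, pow_iterate]
  have hφn : φ ^ n = 1 := RingHom.ext fun x => by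
    rw [hφi, ← pow_mul, mul_comm, pow_mul, ← hF, FiniteField.pow_card_pow]
    rfl
  have hfix : Nat.card {x : F // φ x = x} ≤ q := by
    simp_rw [hφ1]
    exact card_fixed q n s hq2 hs hF
  have hker' : Nat.card (linPoly φ n a).ker = q ^ μ := by
    rw [← hker]
    refine Nat.card_congr (Equiv.subtypeEquivRight fun x => ?_)
    simp_rw [← hφi]
    rfl
  have hF' : Nat.card F = q ^ n := by rw [Nat.card_eq_fintype_card, hF]
  have hμ : μ ≤ n := by
    have h := Nat.card_le_card_of_injective _ (linPoly φ n a).ker.subtype_injective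
    rw [hker', hF'] at h
    exact (Nat.pow_le_pow_iff_right (by omega)).1 h
  rw [key φ q n hq2 hn hF' hφn hfix a μ m j0 k0 hker' hm hμ _ fun r t => ?_,
    key φ q n hq2 hn hF' hφn hfix a μ m (n - m) 0 hker' hm hμ _ fun r t => ?_]
  · -- `D_m` is the cyclic minor whose removed rows start at `n - m` and removed columns at `0`.
    have hr : (n - m + m + r.val) % n = r.val := by
      rw [Nat.sub_add_cancel (by omega), Nat.add_mod_left, Nat.mod_eq_of_lt (by omega)]
    have ht : (0 + (m + t.val)) % n = t.val + m := by
      rw [Nat.mod_eq_of_lt (by omega)]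
      omega
    simp only [dickSub, Matrix.of_apply, hφi, hr, ht]
  · simp only [dickSub, Matrix.submatrix_apply, Matrix.of_apply, hφi, add_zero, add_assoc]
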